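/- arXiv:2505.19102 — 8 statements merged into one kernel-verified Lean document; each statement's English description precedes it below -/
import Mathlib

section
/- Let X and Y be real-valued random variables on a common probability space and let p ≥ 1 be such that E[|Y|^p] < ∞. Then sup_{x∈ℝ} |P(X + Y ≤ x) − Φ(x)| ≤ sup_{x∈ℝ} |P(X ≤ x) − Φ(x)| + 2 (E[|Y|^p])^{1/(p+1)}. -/
open MeasureTheory ProbabilityTheory Set

/-- Cumulative distribution function of the standard Gaussian law `N(0,1)`. -/
noncomputable def stdGaussianCDF (x : ℝ) : ℝ :=
  ((gaussianReal 0 1) (Set.Iic x)).toReal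

/-!
Off the event `{ε < |Y|}` the variables `X` and `X + Y` differ by at most `ε`, so their
distribution functions agree up to a shift of the argument by `ε` and an error `ℙ(ε < |Y|)`.
Since the Gaussian density is at most `1`, the shift changes `Φ` by at most `ε`. By Markov's
inequality `ℙ(ε < |Y|) ≤ E[|Y| ^ p] / ε ^ p`, and the choice `ε ^ (p + 1) = E[|Y| ^ p]` makes this
second error equal to `ε` as well.
-/

open scoped NNReal

lemma gaussianPDFReal_le_inv_sqrt (m : ℝ) (v : ℝ≥0) (x : ℝ) :
    gaussianPDFReal m v x ≤ (√(2 * Real.pi * v))⁻¹ := by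
  have hexp : Real.exp (-(x - m) ^ 2 / (2 * v)) ≤ 1 :=
    Real.exp_le_one_iff.2 <|
      div_nonpos_of_nonpos_of_nonneg (neg_nonpos.2 (sq_nonneg _)) (by positivity)
  exact mul_le_of_le_one_right (by positivity) hexp

lemma gaussianReal_le_smul_volume (m : ℝ) {v : ℝ≥0} (hv : v ≠ 0) :
    gaussianReal m v ≤ ENNReal.ofReal (√(2 * Real.pi * v))⁻¹ • volume := by
  rw [gaussianReal_of_var_ne_zero m hv, ← withDensity_const]
  exact withDensity_mono (ae_of_all _ fun x =>
    ENNReal.ofReal_le_ofReal (gaussianPDFReal_le_inv_sqrt m v x))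

lemma gaussianReal_zero_one_le_volume : gaussianReal 0 1 ≤ volume := by
  have hsqrt : 1 ≤ √(2 * Real.pi * (1 : ℝ≥0)) := by
    rw [Real.one_le_sqrt, NNReal.coe_one]
    linarith [Real.pi_gt_three]
  calc gaussianReal 0 1
      ≤ ENNReal.ofReal (√(2 * Real.pi * (1 : ℝ≥0)))⁻¹ • volume :=
        gaussianReal_le_smul_volume 0 one_ne_zero
    _ ≤ (1 : ENNReal) • volume := by
        gcongr
        exact ENNReal.ofReal_le_one.2 (inv_le_one_of_one_le₀ hsqrt)
    _ = volume := one_smul _ _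

lemma lipschitzWith_measureReal_Iic {ν : Measure ℝ} [IsFiniteMeasure ν] {c : ℝ≥0}
    (hν : ν ≤ c • volume) : LipschitzWith c fun x => ν.real (Iic x) := by
  refine LipschitzWith.of_le_add_mul c fun x y => ?_
  have hIoc : ν.real (Ioc y x) ≤ c * dist x y := by
    refine ENNReal.toReal_le_of_le_ofReal (by positivity) ?_
    calc ν (Ioc y x) ≤ c * ENNReal.ofReal (x - y) := Real.volume_Ioc ▸ hν (Ioc y x)
      _ ≤ c * ENNReal.ofReal (dist x y) := by gcongr; exact le_abs_self _
      _ = ENNReal.ofReal (c * dist x y) := by simp [ENNReal.ofReal_mul]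
  calc ν.real (Iic x) ≤ ν.real (Iic y ∪ Ioc y x) :=
        measureReal_mono Iic_subset_Iic_union_Ioc
    _ ≤ ν.real (Iic y) + ν.real (Ioc y x) := measureReal_union_le _ _
    _ ≤ ν.real (Iic y) + c * dist x y := by gcongr

lemma bddAbove_range_abs_measureReal_sub {ι Ω Ω' : Type*} [MeasurableSpace Ω] [MeasurableSpace Ω']
    (μ : Measure Ω) [IsFiniteMeasure μ] (ν : Measure Ω') [IsFiniteMeasure ν]
    (s : ι → Set Ω) (t : ι → Set Ω') :
    BddAbove (range fun i => |μ.real (s i) - ν.real (t i)|) := by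
  refine ⟨max (μ.real univ) (ν.real univ), forall_mem_range.2 fun i => ?_⟩
  exact abs_sub_le_of_nonneg_of_le
    measureReal_nonneg (le_max_of_le_left (measureReal_mono (subset_univ _)))
    measureReal_nonneg (le_max_of_le_right (measureReal_mono (subset_univ _)))

lemma measureReal_le_add_measureReal_lt_abs_sub {Ω : Type*} [MeasurableSpace Ω] (μ : Measure Ω)
    [IsFiniteMeasure μ] (X Z : Ω → ℝ) (x ε : ℝ) :
    μ.real {ω | Z ω ≤ x} ≤ μ.real {ω | X ω ≤ x + ε} + μ.real {ω | ε < |X ω - Z ω|} := by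
  refine (measureReal_mono fun ω (hω : Z ω ≤ x) => ?_).trans (measureReal_union_le _ _)
  refine (le_or_gt |X ω - Z ω| ε).imp (fun hclose => ?_) id
  change X ω ≤ x + ε
  linarith [le_abs_self (X ω - Z ω)]

lemma ciSup_abs_sub_le_of_shift_le {F G H : ℝ → ℝ} {c : ℝ≥0} (hG : LipschitzWith c G)
    (hbdd : BddAbove (range fun x => |F x - G x|)) {ε δ : ℝ} (hε : 0 ≤ ε)
    (hlower : ∀ x, F (x - ε) ≤ H x + δ) (hupper : ∀ x, H x ≤ F (x + ε) + δ) :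
    ⨆ x, |H x - G x| ≤ (⨆ x, |F x - G x|) + (c * ε + δ) := by
  have hFG (x : ℝ) := abs_sub_le_iff.1 (le_ciSup hbdd x)
  refine ciSup_le fun x => abs_sub_le_iff.2 ⟨?_, ?_⟩
  · have hshift : G (x + ε) ≤ G x + c * ε := by
      simpa [abs_of_nonneg hε] using hG.le_add_mul (x + ε) x
    linarith [hupper x, (hFG (x + ε)).1]
  · have hshift : G x ≤ G (x - ε) + c * ε := by
      simpa [Real.dist_eq, abs_of_nonneg hε] using hG.le_add_mul x (x - ε)
    linarith [hlower x, (hFG (x - ε)).2]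

lemma measureReal_lt_norm_le_of_integral_rpow_le {Ω E : Type*} [MeasurableSpace Ω]
    {μ : Measure Ω} [SeminormedAddGroup E] {Y : Ω → E} {p ε : ℝ} (hp : 0 ≤ p) (hε : 0 ≤ ε)
    (hint : Integrable (fun ω => ‖Y ω‖ ^ p) μ) (hle : ∫ ω, ‖Y ω‖ ^ p ∂μ ≤ ε ^ (p + 1)) :
    μ.real {ω | ε < ‖Y ω‖} ≤ ε := by
  have hnonneg : 0 ≤ fun ω => ‖Y ω‖ ^ p := fun ω => Real.rpow_nonneg (norm_nonneg _) _
  rcases hε.eq_or_lt with rfl | hε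
  · rw [Real.zero_rpow (by linarith)] at hle
    have hzero : (fun ω => ‖Y ω‖ ^ p) =ᵐ[μ] 0 :=
      (integral_eq_zero_iff_of_nonneg hnonneg hint).1 (hle.antisymm (integral_nonneg hnonneg))
    have hnull : μ {ω | 0 < ‖Y ω‖} = 0 :=
      measure_mono_null (fun ω hω => (Real.rpow_pos_of_pos hω p).ne') (ae_iff.1 hzero)
    simp [measureReal_def, hnull]
  · have hεp : 0 < ε ^ p := Real.rpow_pos_of_pos hε p
    have hsubset : {ω | ε < ‖Y ω‖} ⊆ {ω | ε ^ p ≤ ‖Y ω‖ ^ p} := fun ω hω =>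
      Real.rpow_le_rpow hε.le (le_of_lt hω) hp
    refine le_of_mul_le_mul_left ?_ hεp
    calc ε ^ p * μ.real {ω | ε < ‖Y ω‖} ≤ ε ^ p * μ.real {ω | ε ^ p ≤ ‖Y ω‖ ^ p} := by
          gcongr
          exact (hint.measure_ge_lt_top hεp).ne
      _ ≤ ∫ ω, ‖Y ω‖ ^ p ∂μ := mul_meas_ge_le_integral_of_nonneg (ae_of_all μ hnonneg) hint _
      _ ≤ ε ^ (p + 1) := hle
      _ = ε ^ p * ε := Real.rpow_add_one hε.ne' p

theorem stmt1_general {Ω : Type*} [MeasurableSpace Ω] (μ : Measure Ω) [IsFiniteMeasure μ]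
    {ν : Measure ℝ} [IsFiniteMeasure ν] {c : ℝ≥0} (hν : ν ≤ c • volume)
    (X Y : Ω → ℝ) {p : ℝ} (hp : 0 ≤ p) (hint : Integrable (fun ω => |Y ω| ^ p) μ) :
    (⨆ x : ℝ, |μ.real {ω | X ω + Y ω ≤ x} - ν.real (Iic x)|)
      ≤ (⨆ x : ℝ, |μ.real {ω | X ω ≤ x} - ν.real (Iic x)|)
        + (c + 1) * (∫ ω, |Y ω| ^ p ∂μ) ^ (1 / (p + 1)) := by
  have hM : 0 ≤ ∫ ω, |Y ω| ^ p ∂μ := integral_nonneg fun ω => by positivity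
  set ε := (∫ ω, |Y ω| ^ p ∂μ) ^ (1 / (p + 1)) with hε_def
  have hε : 0 ≤ ε := Real.rpow_nonneg hM _
  have hbalance : ∫ ω, |Y ω| ^ p ∂μ = ε ^ (p + 1) := by
    rw [hε_def, one_div, Real.rpow_inv_rpow hM (by linarith)]
  have htail : μ.real {ω | ε < |Y ω|} ≤ ε :=
    measureReal_lt_norm_le_of_integral_rpow_le (Y := Y) hp hε hint hbalance.le
  rw [add_one_mul]
  refine ciSup_abs_sub_le_of_shift_le (lipschitzWith_measureReal_Iic hν)
    (bddAbove_range_abs_measureReal_sub μ ν _ _) hε (fun x => ?_) fun x => ?_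
  · have h := measureReal_le_add_measureReal_lt_abs_sub μ (X + Y) X (x - ε) ε
    simp only [Pi.add_apply, add_sub_cancel_left, sub_add_cancel] at h
    exact h.trans (by gcongr)
  · have h := measureReal_le_add_measureReal_lt_abs_sub μ X (X + Y) x ε
    simp only [Pi.add_apply, sub_add_cancel_left, abs_neg] at h
    exact h.trans (by gcongr)

theorem stmt1 {Ω : Type*} [MeasurableSpace Ω] (μ : Measure Ω) [IsProbabilityMeasure μ]
    (X Y : Ω → ℝ) (hX : Measurable X) (hY : Measurable Y)
    (p : ℝ) (hp : 1 ≤ p)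
    (hint : Integrable (fun ω => |Y ω| ^ p) μ) :
    (⨆ x : ℝ, |(μ {ω | X ω + Y ω ≤ x}).toReal - stdGaussianCDF x|)
      ≤ (⨆ x : ℝ, |(μ {ω | X ω ≤ x}).toReal - stdGaussianCDF x|)
        + 2 * (∫ ω, |Y ω| ^ p ∂μ) ^ (1 / (p + 1)) := by
  have hν : gaussianReal 0 1 ≤ (1 : ℝ≥0) • volume := by simpa using gaussianReal_zero_one_le_volume
  simpa [one_add_one_eq_two, stdGaussianCDF, measureReal_def] using
    stmt1_general μ hν X Y (zero_le_one.trans hp) hint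
end

section
/- Let ξ₁ ~ N(0, σ₁²) and ξ₂ ~ N(0, σ₂²) be centered Gaussian random variables with σ₂² > 0, and suppose |σ₁²/σ₂² − 1| ≤ δ for some δ ≥ 0. Then sup_{x∈ℝ} |P(ξ₁ ≤ x) − P(ξ₂ ≤ x)| ≤ (3/2)δ. -/
open MeasureTheory ProbabilityTheory Set

/-!
Let `Φ` be the standard Gaussian distribution function. The distribution function of the Gaussian
law with mean `μ` and variance `v` at `x` is `Φ ((x - μ) / √v)`, so changing the variance dilates
the argument of `Φ`. On a logarithmic scale the derivative of such a dilation is `y * Φ' y`, which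
is at most `1 / 2` in absolute value. Hence two Gaussian distribution functions with the same mean
and variances `v` and `w` differ by at most `|log (v / w)| / 4`. For `v / w ≥ 1 / 6` this is at
most `(3 / 2) * |v / w - 1|`; for `v / w < 1 / 6` the latter already exceeds `1`.
-/

section Calculus

variable {E : Type*} [NormedAddCommGroup E] [NormedSpace ℝ E]

theorem hasDerivAt_integral_Iic [CompleteSpace E] {f : ℝ → E} {x : ℝ} (hf : Integrable f)
    (hfx : ContinuousAt f x) : HasDerivAt (fun y ↦ ∫ t in Iic y, f t) (f x) x := by
  have hsplit : (fun y ↦ ∫ t in Iic y, f t) = fun y ↦ (∫ t in Iic x, f t) + ∫ t in x..y, f t := by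
    funext y
    rw [← intervalIntegral.integral_Iic_sub_Iic hf.integrableOn hf.integrableOn, add_sub_cancel]
  rw [hsplit]
  exact (intervalIntegral.integral_hasDerivAt_right IntervalIntegrable.refl
    hf.aestronglyMeasurable.stronglyMeasurableAtFilter hfx).const_add _

theorem norm_comp_mul_sub_comp_mul_le_mul_abs_log_div {F F' : ℝ → E} {C : ℝ}
    (hF : ∀ y, HasDerivAt F (F' y) y) (hC : ∀ y, ‖y • F' y‖ ≤ C) {a b : ℝ} (ha : 0 < a)
    (hb : 0 < b) (x : ℝ) : ‖F (a * x) - F (b * x)‖ ≤ C * |Real.log (a / b)| := by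
  have hderiv (u : ℝ) : HasDerivAt (fun u ↦ F (Real.exp u * x))
      ((Real.exp u * x) • F' (Real.exp u * x)) u :=
    (hF _).scomp u ((Real.hasDerivAt_exp u).mul_const x)
  have hmean := convex_univ.norm_image_sub_le_of_norm_hasDerivWithin_le
    (fun u _ ↦ (hderiv u).hasDerivWithinAt) (fun u _ ↦ hC (Real.exp u * x))
    (mem_univ (Real.log b)) (mem_univ (Real.log a))
  rwa [Real.exp_log ha, Real.exp_log hb, ← Real.log_div ha.ne' hb.ne', Real.norm_eq_abs] at hmean

theorem abs_log_le_abs_sub_one_div {c r : ℝ} (hc : 0 < c) (hc_one : c ≤ 1) (hcr : c ≤ r) :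
    |Real.log r| ≤ |r - 1| / c := by
  have hr : 0 < r := hc.trans_le hcr
  have hupper : Real.log r ≤ |r - 1| / c :=
    calc Real.log r ≤ r - 1 := Real.log_le_sub_one_of_pos hr
      _ ≤ |r - 1| := le_abs_self _
      _ ≤ |r - 1| / c := le_div_self (abs_nonneg _) hc hc_one
  have hlower : -Real.log r ≤ |r - 1| / c :=
    calc -Real.log r ≤ r⁻¹ - 1 := by linarith [Real.one_sub_inv_le_log_of_pos hr]
      _ = -(r - 1) / r := by field_simp; ring
      _ ≤ |r - 1| / r := by gcongr; exact neg_le_abs _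
      _ ≤ |r - 1| / c := by gcongr
  exact abs_le'.mpr ⟨hupper, hlower⟩

end Calculus

section Gaussian

open scoped NNReal

theorem abs_sub_mul_gaussianPDFReal_le (μ : ℝ) (v : ℝ≥0) (x : ℝ) :
    |(x - μ) * gaussianPDFReal μ v x| ≤ 1 / 2 := by
  set s : ℝ := (x - μ) ^ 2 / v with hs
  have hexp : Real.exp (-(x - μ) ^ 2 / (2 * v)) ^ 2 = Real.exp (-s) := by
    rw [← Real.exp_nat_mul, hs]
    ring_nf
  have hsq : ((x - μ) * gaussianPDFReal μ v x) ^ 2 = (2 * Real.pi)⁻¹ * (s * Real.exp (-s)) := by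
    rw [gaussianPDFReal, mul_pow, mul_pow, inv_pow, Real.sq_sqrt (by positivity), hexp, hs]
    ring
  have hs_exp : s * Real.exp (-s) ≤ 1 :=
    (Real.mul_exp_neg_le_exp_neg_one s).trans (Real.exp_le_one_iff.mpr (by norm_num))
  refine abs_le_of_sq_le_sq ?_ (by norm_num)
  calc ((x - μ) * gaussianPDFReal μ v x) ^ 2 = (2 * Real.pi)⁻¹ * (s * Real.exp (-s)) := hsq
    _ ≤ (2 * 2)⁻¹ * 1 := by gcongr; exact Real.two_le_pi
    _ = (1 / 2) ^ 2 := by norm_num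

variable (μ : ℝ) {v w : ℝ≥0}

theorem cdf_gaussianReal_eq_integral (hv : v ≠ 0) (x : ℝ) :
    cdf (gaussianReal μ v) x = ∫ t in Iic x, gaussianPDFReal μ v t := by
  rw [cdf_eq_real, measureReal_def, gaussianReal_apply_eq_integral μ hv, ENNReal.toReal_ofReal]
  exact integral_nonneg (gaussianPDFReal_nonneg μ v)

theorem hasDerivAt_cdf_gaussianReal (hv : v ≠ 0) (x : ℝ) :
    HasDerivAt (cdf (gaussianReal μ v)) (gaussianPDFReal μ v x) x := by
  have hcont : Continuous (gaussianPDFReal μ v) := by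
    rw [gaussianPDFReal_def]
    fun_prop
  rw [funext (cdf_gaussianReal_eq_integral μ hv)]
  exact hasDerivAt_integral_Iic (integrable_gaussianPDFReal μ v) hcont.continuousAt

theorem cdf_gaussianReal_eq_cdf_standard (hv : v ≠ 0) (x : ℝ) :
    cdf (gaussianReal μ v) x = cdf (gaussianReal 0 1) ((√v)⁻¹ * (x - μ)) := by
  have hsqrt : 0 < √(v : ℝ) := Real.sqrt_pos.mpr (by positivity)
  have hvar : (.mk (√(v : ℝ) ^ 2) (sq_nonneg _) : ℝ≥0) = v := by
    ext
    simp
  have hmap : (gaussianReal 0 1).map (fun y ↦ √v * y + μ) = gaussianReal μ v := by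
    have hcomp := Measure.map_map (μ := gaussianReal 0 1) (measurable_add_const μ)
      (measurable_const_mul (√(v : ℝ)))
    rw [gaussianReal_map_const_mul, gaussianReal_map_add_const, hvar] at hcomp
    simpa only [mul_zero, zero_add, mul_one] using! hcomp.symm
  have hpreimage : (fun y ↦ √v * y + μ) ⁻¹' Iic x = Iic ((√v)⁻¹ * (x - μ)) := by
    ext y
    rw [mem_preimage, mem_Iic, mem_Iic, le_inv_mul_iff₀ hsqrt, le_sub_iff_add_le]
  rw [cdf_eq_real, cdf_eq_real, ← hmap,
    map_measureReal_apply (by fun_prop) measurableSet_Iic, hpreimage]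

theorem abs_cdf_gaussianReal_sub_le_abs_log_div (hv : v ≠ 0) (hw : w ≠ 0) (x : ℝ) :
    |cdf (gaussianReal μ v) x - cdf (gaussianReal μ w) x| ≤ |Real.log (v / w)| / 4 := by
  have hinv_sqrt {u : ℝ≥0} (hu : u ≠ 0) : 0 < (√(u : ℝ))⁻¹ :=
    inv_pos.mpr (Real.sqrt_pos.mpr (by positivity))
  have hlog : Real.log ((√(v : ℝ))⁻¹ / (√(w : ℝ))⁻¹) = -(Real.log (v / w) / 2) := by
    rw [← Real.log_sqrt (by positivity), Real.sqrt_div v.coe_nonneg, ← Real.log_inv, inv_div,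
      inv_div_inv]
  have hderiv_bound (y : ℝ) : ‖y • gaussianPDFReal 0 1 y‖ ≤ 1 / 2 := by
    simpa only [sub_zero, smul_eq_mul, Real.norm_eq_abs] using abs_sub_mul_gaussianPDFReal_le 0 1 y
  rw [cdf_gaussianReal_eq_cdf_standard μ hv, cdf_gaussianReal_eq_cdf_standard μ hw]
  calc |cdf (gaussianReal 0 1) ((√v)⁻¹ * (x - μ)) - cdf (gaussianReal 0 1) ((√w)⁻¹ * (x - μ))|
      ≤ 1 / 2 * |Real.log ((√v)⁻¹ / (√w)⁻¹)| :=
        norm_comp_mul_sub_comp_mul_le_mul_abs_log_div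
          (hasDerivAt_cdf_gaussianReal 0 one_ne_zero) hderiv_bound
          (hinv_sqrt hv) (hinv_sqrt hw) (x - μ)
    _ = |Real.log (v / w)| / 4 := by
        rw [hlog, abs_neg, abs_div, abs_two]
        ring

theorem abs_cdf_gaussianReal_sub_le_abs_div_sub_one (hw : w ≠ 0) (x : ℝ) :
    |cdf (gaussianReal μ v) x - cdf (gaussianReal μ w) x| ≤ 3 / 2 * |(v : ℝ) / w - 1| := by
  rcases lt_or_ge ((v : ℝ) / w) (1 / 6) with hsmall | hlarge
  · calc |cdf (gaussianReal μ v) x - cdf (gaussianReal μ w) x| ≤ 1 :=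
          abs_sub_le_of_nonneg_of_le (cdf_nonneg _ x) (cdf_le_one _ x) (cdf_nonneg _ x)
            (cdf_le_one _ x)
      _ ≤ 3 / 2 * |(v : ℝ) / w - 1| := by linarith [neg_le_abs ((v : ℝ) / w - 1)]
  · have hv : v ≠ 0 := by
      rintro rfl
      norm_num at hlarge
    calc |cdf (gaussianReal μ v) x - cdf (gaussianReal μ w) x| ≤ |Real.log (v / w)| / 4 :=
          abs_cdf_gaussianReal_sub_le_abs_log_div μ hv hw x
      _ ≤ |(v : ℝ) / w - 1| / (1 / 6) / 4 := by
          gcongr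
          exact abs_log_le_abs_sub_one_div (by norm_num) (by norm_num) hlarge
      _ = 3 / 2 * |(v : ℝ) / w - 1| := by ring

end Gaussian

theorem stmt2_general (μ : ℝ) (v₁ v₂ : NNReal) (hv₂ : 0 < (v₂ : ℝ)) (δ : ℝ)
    (h : |(v₁ : ℝ) / (v₂ : ℝ) - 1| ≤ δ) :
    (⨆ x : ℝ,
        |((gaussianReal μ v₁) (Set.Iic x)).toReal - ((gaussianReal μ v₂) (Set.Iic x)).toReal|)
      ≤ (3 / 2) * δ := by
  refine ciSup_le fun x ↦ ?_
  rw [← measureReal_def, ← measureReal_def, ← cdf_eq_real, ← cdf_eq_real]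
  calc |cdf (gaussianReal μ v₁) x - cdf (gaussianReal μ v₂) x|
      ≤ 3 / 2 * |(v₁ : ℝ) / v₂ - 1| :=
        abs_cdf_gaussianReal_sub_le_abs_div_sub_one μ (NNReal.coe_pos.mp hv₂).ne' x
    _ ≤ 3 / 2 * δ := by gcongr

theorem stmt2 (v₁ v₂ : NNReal) (hv₂ : 0 < (v₂ : ℝ)) (δ : ℝ) (hδ : 0 ≤ δ)
    (h : |(v₁ : ℝ) / (v₂ : ℝ) - 1| ≤ δ) :
    (⨆ x : ℝ,
        |((gaussianReal 0 v₁) (Set.Iic x)).toReal - ((gaussianReal 0 v₂) (Set.Iic x)).toReal|)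
      ≤ (3 / 2) * δ :=
  stmt2_general 0 v₁ v₂ hv₂ δ h
end

section
/- Let A > 0, γ ∈ (1/2, 1), and let i, n be integers with 0 ≤ i ≤ n−1. Then Σ_{j=i}^{n−1} exp{−A(j^{1−γ} − i^{1−γ})} is bounded by: (a) 1 + exp{1/(1−γ)} · Γ(1/(1−γ)) / (A^{1/(1−γ)}(1−γ)) if i ≥ 1 and A·i^{1−γ} ≤ 1/(1−γ); (b) 1 + i^γ/(A(1−γ)²) if i ≥ 1 and A·i^{1−γ} > 1/(1−γ); (c) 1 + Γ(1/(1−γ)) / (A^{1/(1−γ)}(1−γ)) if i = 0. -/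
open Finset

/-!
With `p = 1 - γ`, all but the first term of the sum are at most
`exp (A * i ^ p) * ∫ x in i..(n - 1), exp (-A * x ^ p)`. Extending the integral to `(0, ∞)` turns it
into a Gamma value, which gives (a) and (c). For (b), the derivative of
`-(x ^ (1 - p) * exp (-A * x ^ p))` is `(A * p - (1 - p) * x ^ (-p)) * exp (-A * x ^ p)`; the first
factor increases with `x`, and it is at least `A * p ^ 2` as soon as `1 / p ≤ A * x ^ p`.
-/

section ExpNegMulRpow

open Real MeasureTheory

lemma sum_Icc_le_add_integral_of_antitoneOn {f : ℝ → ℝ} {i m : ℕ} (him : i ≤ m)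
    (hf : AntitoneOn f (Set.Icc i m)) :
    ∑ j ∈ Icc i m, f j ≤ f i + ∫ x in (i : ℝ)..m, f x := by
  rw [← add_sum_Ioc_eq_sum_Icc him, ← Ico_add_one_add_one_eq_Ioc, ← sum_Ico_add']
  gcongr
  exact hf.sum_le_integral_Ico him

variable {A p : ℝ}

lemma antitoneOn_exp_neg_mul_rpow (hA : 0 ≤ A) (hp : 0 ≤ p) :
    AntitoneOn (fun x : ℝ => exp (-A * x ^ p)) (Set.Ici 0) := by
  intro x hx y _ hxy
  have hpow : A * x ^ p ≤ A * y ^ p :=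
    mul_le_mul_of_nonneg_left (rpow_le_rpow hx hxy hp) hA
  exact exp_le_exp.mpr (by linarith)

lemma sum_exp_neg_mul_rpow_sub_le (hA : 0 ≤ A) (hp : 0 ≤ p) {i m : ℕ} (him : i ≤ m) :
    ∑ j ∈ Icc i m, exp (-A * ((j : ℝ) ^ p - (i : ℝ) ^ p)) ≤
      1 + exp (A * (i : ℝ) ^ p) * ∫ x in (i : ℝ)..m, exp (-A * x ^ p) := by
  have hanti : AntitoneOn (fun x : ℝ => exp (-A * x ^ p)) (Set.Icc i m) :=
    (antitoneOn_exp_neg_mul_rpow hA hp).mono fun x hx => i.cast_nonneg.trans hx.1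
  calc ∑ j ∈ Icc i m, exp (-A * ((j : ℝ) ^ p - (i : ℝ) ^ p))
      = exp (A * (i : ℝ) ^ p) * ∑ j ∈ Icc i m, exp (-A * (j : ℝ) ^ p) := by
        rw [mul_sum]
        refine sum_congr rfl fun j _ => ?_
        rw [← exp_add]
        ring_nf
    _ ≤ exp (A * (i : ℝ) ^ p) *
          (exp (-A * (i : ℝ) ^ p) + ∫ x in (i : ℝ)..m, exp (-A * x ^ p)) :=
        mul_le_mul_of_nonneg_left (sum_Icc_le_add_integral_of_antitoneOn him hanti)
          (exp_pos _).le
    _ = 1 + exp (A * (i : ℝ) ^ p) * ∫ x in (i : ℝ)..m, exp (-A * x ^ p) := by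
        rw [mul_add, ← exp_add, neg_mul, add_neg_cancel, exp_zero]

lemma integral_Ioi_exp_neg_mul_rpow (hA : 0 < A) (hp : 0 < p) :
    ∫ x in Set.Ioi (0 : ℝ), exp (-A * x ^ p) = Gamma (1 / p) / (A ^ (1 / p) * p) := by
  rw [integral_exp_neg_mul_rpow hp hA, Gamma_add_one (by positivity), neg_div, rpow_neg hA.le]
  field_simp

lemma integral_exp_neg_mul_rpow_le_Gamma (hA : 0 < A) (hp : 0 < p) {a b : ℝ} (ha : 0 ≤ a)
    (hab : a ≤ b) :
    ∫ x in a..b, exp (-A * x ^ p) ≤ Gamma (1 / p) / (A ^ (1 / p) * p) := by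
  have hint : IntegrableOn (fun x : ℝ => exp (-A * x ^ p)) (Set.Ioi 0) := by
    simpa using integrableOn_rpow_mul_exp_neg_mul_rpow (s := 0) (by norm_num) hp hA
  have hsub : Set.Ioc a b ⊆ Set.Ioi 0 := fun x hx => ha.trans_lt hx.1
  rw [intervalIntegral.integral_of_le hab, ← integral_Ioi_exp_neg_mul_rpow hA hp]
  exact setIntegral_mono_set hint (.of_forall fun x => (exp_pos _).le) hsub.eventuallyLE

lemma hasDerivAt_neg_rpow_mul_exp_neg_mul_rpow (A p : ℝ) {x : ℝ} (hx : 0 < x) :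
    HasDerivAt (fun x : ℝ => -(x ^ (1 - p) * exp (-A * x ^ p)))
      ((A * p - (1 - p) * x ^ (-p)) * exp (-A * x ^ p)) x := by
  have hpow : HasDerivAt (fun x : ℝ => x ^ (1 - p)) ((1 - p) * x ^ (1 - p - 1)) x :=
    hasDerivAt_rpow_const (.inl hx.ne')
  have hexp : HasDerivAt (fun x : ℝ => exp (-A * x ^ p))
      (exp (-A * x ^ p) * (-A * (p * x ^ (p - 1)))) x :=
    ((hasDerivAt_rpow_const (.inl hx.ne')).const_mul (-A)).exp
  refine (hpow.mul hexp).neg.congr_deriv ?_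
  have hone : x ^ (1 - p) * x ^ (p - 1) = 1 := by
    rw [← rpow_add hx, sub_add_sub_cancel', sub_self, rpow_zero]
  rw [sub_sub_cancel_left]
  linear_combination A * p * exp (-A * x ^ p) * hone

lemma mul_integral_exp_neg_mul_rpow_le (A : ℝ) (hp₀ : 0 ≤ p) (hp₁ : p ≤ 1) {a b : ℝ} (ha : 0 < a)
    (hab : a ≤ b) :
    (A * p - (1 - p) * a ^ (-p)) * ∫ x in a..b, exp (-A * x ^ p) ≤
      a ^ (1 - p) * exp (-A * a ^ p) := by
  have hcont : Continuous fun x : ℝ => (A * p - (1 - p) * a ^ (-p)) * exp (-A * x ^ p) := by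
    have := continuous_rpow_const hp₀
    fun_prop
  have hderiv_le : ∀ x ∈ Set.Ioo a b, (A * p - (1 - p) * a ^ (-p)) * exp (-A * x ^ p) ≤
      (A * p - (1 - p) * x ^ (-p)) * exp (-A * x ^ p) := fun x hx => by
    have hpow : x ^ (-p) ≤ a ^ (-p) :=
      rpow_le_rpow_of_nonpos ha hx.1.le (neg_nonpos.mpr hp₀)
    have : 0 ≤ 1 - p := sub_nonneg.mpr hp₁
    gcongr
  have hle := intervalIntegral.integral_le_sub_of_hasDeriv_right_of_le hab
    (fun x hx => (hasDerivAt_neg_rpow_mul_exp_neg_mul_rpow A p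
      (ha.trans_le hx.1)).continuousAt.continuousWithinAt)
    (fun x hx => (hasDerivAt_neg_rpow_mul_exp_neg_mul_rpow A p
      (ha.trans hx.1)).hasDerivWithinAt)
    hcont.integrableOn_Icc hderiv_le
  have hb : 0 ≤ b ^ (1 - p) * exp (-A * b ^ p) :=
    mul_nonneg (rpow_nonneg (ha.le.trans hab) _) (exp_pos _).le
  rw [intervalIntegral.integral_const_mul] at hle
  linarith

lemma mul_sq_le_sub_mul_rpow_neg (hp₀ : 0 < p) (hp₁ : p ≤ 1) {a : ℝ} (ha : 0 < a)
    (hlarge : 1 / p ≤ A * a ^ p) : A * p ^ 2 ≤ A * p - (1 - p) * a ^ (-p) := by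
  have hpow : a ^ (-p) ≤ A * p := by
    rw [rpow_neg ha.le, inv_le_iff_one_le_mul₀ (rpow_pos_of_pos ha p)]
    linarith [(div_le_iff₀ hp₀).mp hlarge]
  linarith [mul_le_mul_of_nonneg_left hpow (sub_nonneg.mpr hp₁)]

lemma exp_mul_integral_exp_neg_mul_rpow_le (hA : 0 < A) (hp₀ : 0 < p) (hp₁ : p ≤ 1) {a b : ℝ}
    (ha : 0 < a) (hab : a ≤ b) (hlarge : 1 / p ≤ A * a ^ p) :
    exp (A * a ^ p) * ∫ x in a..b, exp (-A * x ^ p) ≤ a ^ (1 - p) / (A * p ^ 2) := by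
  have hint : 0 ≤ ∫ x in a..b, exp (-A * x ^ p) :=
    intervalIntegral.integral_nonneg hab fun x _ => (exp_pos _).le
  rw [le_div_iff₀' (by positivity)]
  calc A * p ^ 2 * (exp (A * a ^ p) * ∫ x in a..b, exp (-A * x ^ p))
      = exp (A * a ^ p) * (A * p ^ 2 * ∫ x in a..b, exp (-A * x ^ p)) := by ring
    _ ≤ exp (A * a ^ p) *
          ((A * p - (1 - p) * a ^ (-p)) * ∫ x in a..b, exp (-A * x ^ p)) := by
        gcongr
        exact mul_sq_le_sub_mul_rpow_neg hp₀ hp₁ ha hlarge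
    _ ≤ exp (A * a ^ p) * (a ^ (1 - p) * exp (-A * a ^ p)) := by
        gcongr exp _ * ?_
        exact mul_integral_exp_neg_mul_rpow_le A hp₀.le hp₁ ha hab
    _ = a ^ (1 - p) := by
        rw [mul_left_comm, ← exp_add, neg_mul, add_neg_cancel, exp_zero, mul_one]

end ExpNegMulRpow

theorem stmt4_general {A γ : ℝ} (hA : 0 < A) (hγ : γ < 1) {i m : ℕ} (him : i ≤ m) :
    (A * (i : ℝ) ^ (1 - γ) ≤ 1 / (1 - γ) →
      ∑ j ∈ Finset.Icc i m, Real.exp (-A * ((j : ℝ) ^ (1 - γ) - (i : ℝ) ^ (1 - γ)))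
        ≤ 1 + Real.exp (1 / (1 - γ)) *
            (Real.Gamma (1 / (1 - γ)) / (A ^ (1 / (1 - γ)) * (1 - γ)))) ∧
    (0 ≤ γ → 1 / (1 - γ) ≤ A * (i : ℝ) ^ (1 - γ) →
      ∑ j ∈ Finset.Icc i m, Real.exp (-A * ((j : ℝ) ^ (1 - γ) - (i : ℝ) ^ (1 - γ)))
        ≤ 1 + (i : ℝ) ^ γ / (A * (1 - γ) ^ 2)) ∧
    (i = 0 →
      ∑ j ∈ Finset.Icc i m, Real.exp (-A * ((j : ℝ) ^ (1 - γ) - (i : ℝ) ^ (1 - γ)))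
        ≤ 1 + Real.Gamma (1 / (1 - γ)) / (A ^ (1 / (1 - γ)) * (1 - γ))) := by
  have hp : 0 < 1 - γ := sub_pos.mpr hγ
  have hcast : (i : ℝ) ≤ m := Nat.cast_le.mpr him
  have hsum := sum_exp_neg_mul_rpow_sub_le hA.le hp.le him
  have hGamma := integral_exp_neg_mul_rpow_le_Gamma hA hp i.cast_nonneg hcast
  refine ⟨fun hsmall => hsum.trans ?_, fun hγ₀ hlarge => hsum.trans ?_, ?_⟩
  · have := Real.Gamma_pos_of_pos (one_div_pos.mpr hp)
    grw [hGamma, hsmall]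
  · have hi : 0 < (i : ℝ) := i.cast_nonneg.lt_of_ne' fun h0 => by
      rw [h0, Real.zero_rpow hp.ne', mul_zero] at hlarge
      exact (one_div_pos.mpr hp).not_ge hlarge
    have hint := exp_mul_integral_exp_neg_mul_rpow_le hA hp (sub_le_self 1 hγ₀) hi hcast hlarge
    rw [sub_sub_cancel] at hint
    gcongr
  · rintro rfl
    refine hsum.trans ?_
    rw [Nat.cast_zero, Real.zero_rpow hp.ne', mul_zero, Real.exp_zero, one_mul]
    simpa using hGamma

theorem stmt4 (A γ : ℝ) (hA : 0 < A) (hγ : γ ∈ Set.Ioo (1/2 : ℝ) 1)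
    (i n : ℕ) (hn : 1 ≤ n) (hi : i ≤ n - 1) :
    ((1 ≤ i ∧ A * (i : ℝ) ^ (1 - γ) ≤ 1 / (1 - γ)) →
      ∑ j ∈ Finset.Icc i (n - 1), Real.exp (-A * ((j : ℝ) ^ (1 - γ) - (i : ℝ) ^ (1 - γ)))
        ≤ 1 + Real.exp (1 / (1 - γ)) *
            (Real.Gamma (1 / (1 - γ)) / (A ^ (1 / (1 - γ)) * (1 - γ)))) ∧
    ((1 ≤ i ∧ 1 / (1 - γ) < A * (i : ℝ) ^ (1 - γ)) →
      ∑ j ∈ Finset.Icc i (n - 1), Real.exp (-A * ((j : ℝ) ^ (1 - γ) - (i : ℝ) ^ (1 - γ)))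
        ≤ 1 + (i : ℝ) ^ γ / (A * (1 - γ) ^ 2)) ∧
    (i = 0 →
      ∑ j ∈ Finset.Icc i (n - 1), Real.exp (-A * ((j : ℝ) ^ (1 - γ) - (i : ℝ) ^ (1 - γ)))
        ≤ 1 + Real.Gamma (1 / (1 - γ)) / (A ^ (1 / (1 - γ)) * (1 - γ))) := by
  obtain ⟨hsmall, hlarge, hzero⟩ := stmt4_general hA hγ.2 hi
  exact ⟨fun h => hsmall h.2, fun h => hlarge (by linarith [hγ.1]) h.2.le, hzero⟩
end

section
/- Let b, c₀ > 0, γ ∈ (1/2, 1), k₀ ≥ 0, and set α_ℓ = c₀/(ℓ+k₀)^γ. Assume b·c₀ < 1 and k₀^{1−γ} ≥ 2/(b·c₀). Then for all integers 1 ≤ ℓ ≤ n−1, Σ_{k=ℓ}^{n−1} α_ℓ · ∏_{j=ℓ+1}^{k} (1 − b·α_j) ≤ c₀ + 2/(b(1−γ)), where the product over an empty index range equals 1. -/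
open Finset

/-!
The sum is controlled by a Lyapunov sequence: if `B ≥ 0` and `1 + q (k + 1) * B (k + 1) ≤ B k`,
then the partial products of the factors `q` telescope against `B`, and their sum is at most `B ℓ`.
For `q k = 1 - b * α k` the choice `B k = ((b - δ) * α k)⁻¹` works as soon as the inverse step sizes
grow by at most `δ < b` per step. By concavity of `x ↦ x ^ γ`, the inverses of
`α k = c₀ / (k + k₀) ^ γ` grow by at most `γ * k₀ ^ (γ - 1) / c₀` per step, and the lower bound on
`k₀` makes this at most `γ * b / 2`.
-/

section LyapunovSums

variable {R : Type*} [CommRing R] [LinearOrder R] [IsStrictOrderedRing R] {q B : ℕ → R} {ℓ : ℕ}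

lemma sum_prod_Icc_add_mul_le (hq : ∀ k, ℓ < k → 0 ≤ q k)
    (hB : ∀ k, ℓ ≤ k → 1 + q (k + 1) * B (k + 1) ≤ B k) {m : ℕ} (hm : ℓ ≤ m) :
    ∑ k ∈ Ico ℓ m, ∏ j ∈ Icc (ℓ + 1) k, q j + (∏ j ∈ Icc (ℓ + 1) m, q j) * B m ≤ B ℓ := by
  induction m, hm using Nat.le_induction with
  | base => simp
  | succ m hm ih =>
    have hprod : 0 ≤ ∏ j ∈ Icc (ℓ + 1) m, q j := prod_nonneg fun j hj => hq j (mem_Icc.1 hj).1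
    rw [sum_Ico_succ_top hm, prod_Icc_succ_top (by lia)]
    linarith [mul_le_mul_of_nonneg_left (hB m hm) hprod]

lemma sum_prod_Icc_le (hq : ∀ k, ℓ < k → 0 ≤ q k) (hB₀ : ∀ k, ℓ ≤ k → 0 ≤ B k)
    (hB : ∀ k, ℓ ≤ k → 1 + q (k + 1) * B (k + 1) ≤ B k) (m : ℕ) :
    ∑ k ∈ Icc ℓ m, ∏ j ∈ Icc (ℓ + 1) k, q j ≤ B ℓ := by
  obtain hm | hm := lt_or_ge m ℓ
  · simpa only [Icc_eq_empty_of_lt hm, sum_empty] using hB₀ ℓ le_rfl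
  have hrest : 0 ≤ (∏ j ∈ Icc (ℓ + 1) (m + 1), q j) * B (m + 1) :=
    mul_nonneg (prod_nonneg fun j hj => hq j (mem_Icc.1 hj).1) (hB₀ _ (by lia))
  rw [← Ico_add_one_right_eq_Icc]
  exact (le_add_of_nonneg_right hrest).trans (sum_prod_Icc_add_mul_le hq hB (by lia))

lemma sum_mul_prod_one_sub_le_inv_sub {K : Type*} [Field K] [LinearOrder K]
    [IsStrictOrderedRing K] {b δ : K} (hδ : δ < b) {α : ℕ → K}
    (hα : ∀ k, ℓ ≤ k → 0 < α k) (hbα : ∀ k, ℓ < k → b * α k ≤ 1)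
    (hinv : ∀ k, ℓ ≤ k → (α (k + 1))⁻¹ - (α k)⁻¹ ≤ δ) (m : ℕ) :
    ∑ k ∈ Icc ℓ m, α ℓ * ∏ j ∈ Icc (ℓ + 1) k, (1 - b * α j) ≤ (b - δ)⁻¹ := by
  have hbδ : 0 < b - δ := sub_pos.2 hδ
  have hlyapunov : ∀ k, ℓ ≤ k →
      1 + (1 - b * α (k + 1)) * ((α (k + 1))⁻¹ / (b - δ)) ≤ (α k)⁻¹ / (b - δ) := fun k hk => by
    have hα' : α (k + 1) ≠ 0 := (hα (k + 1) (by lia)).ne'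
    calc 1 + (1 - b * α (k + 1)) * ((α (k + 1))⁻¹ / (b - δ))
        = ((α (k + 1))⁻¹ - δ) / (b - δ) := by field_simp; ring
      _ ≤ (α k)⁻¹ / (b - δ) := by gcongr; linarith [hinv k hk]
  have hsum : ∑ k ∈ Icc ℓ m, ∏ j ∈ Icc (ℓ + 1) k, (1 - b * α j) ≤ (α ℓ)⁻¹ / (b - δ) :=
    sum_prod_Icc_le (B := fun k => (α k)⁻¹ / (b - δ)) (fun k hk => sub_nonneg.2 (hbα k hk))
      (fun k hk => div_nonneg (inv_nonneg.2 (hα k hk).le) hbδ.le) hlyapunov m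
  have hαℓ : 0 < α ℓ := hα ℓ le_rfl
  calc ∑ k ∈ Icc ℓ m, α ℓ * ∏ j ∈ Icc (ℓ + 1) k, (1 - b * α j)
      = α ℓ * ∑ k ∈ Icc ℓ m, ∏ j ∈ Icc (ℓ + 1) k, (1 - b * α j) := (mul_sum ..).symm
    _ ≤ α ℓ * ((α ℓ)⁻¹ / (b - δ)) := by gcongr
    _ = (b - δ)⁻¹ := by field_simp

end LyapunovSums

section PolynomialStepSizes

variable {γ : ℝ}

lemma add_rpow_le_rpow_add_mul {x y : ℝ} (hx : 0 < x) (hxy : 0 ≤ x + y) (hγ₀ : 0 ≤ γ)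
    (hγ₁ : γ ≤ 1) : (x + y) ^ γ ≤ x ^ γ + γ * x ^ (γ - 1) * y := by
  have hfactor : x + y = x * (1 + y / x) := by field_simp
  have hbase : 0 ≤ 1 + y / x := nonneg_of_mul_nonneg_right (hfactor ▸ hxy) hx
  calc (x + y) ^ γ = x ^ γ * (1 + y / x) ^ γ := by rw [hfactor, Real.mul_rpow hx.le hbase]
    _ ≤ x ^ γ * (1 + γ * (y / x)) := by
        gcongr
        exact rpow_one_add_le_one_add_mul_self (by linarith) hγ₀ hγ₁
    _ = x ^ γ + γ * x ^ (γ - 1) * y := by rw [Real.rpow_sub_one hx.ne']; ring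

lemma inv_div_add_one_rpow_sub_inv_div_rpow_le {c x₀ x : ℝ} (hc : 0 < c) (hx₀ : 0 < x₀)
    (hx : x₀ ≤ x) (hγ₀ : 0 ≤ γ) (hγ₁ : γ ≤ 1) :
    (c / (x + 1) ^ γ)⁻¹ - (c / x ^ γ)⁻¹ ≤ γ * x₀ ^ (γ - 1) / c := by
  have hx_pos : 0 < x := hx₀.trans_le hx
  have htangent : (x + 1) ^ γ ≤ x ^ γ + γ * x ^ (γ - 1) * 1 :=
    add_rpow_le_rpow_add_mul hx_pos (by linarith) hγ₀ hγ₁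
  calc (c / (x + 1) ^ γ)⁻¹ - (c / x ^ γ)⁻¹ = ((x + 1) ^ γ - x ^ γ) / c := by
        rw [inv_div, inv_div, sub_div]
    _ ≤ γ * x ^ (γ - 1) / c := by gcongr; linarith
    _ ≤ γ * x₀ ^ (γ - 1) / c := by
        gcongr γ * ?_ / c
        exact Real.rpow_le_rpow_of_nonpos hx₀ hx (by linarith)

lemma sum_mul_prod_one_sub_div_rpow_le {b c₀ k₀ : ℝ} (hc₀ : 0 < c₀) (hγ₀ : 0 ≤ γ) (hγ₁ : γ ≤ 1)
    (hk₀ : 0 < k₀) (hbc : b * c₀ ≤ k₀ ^ γ) (hδ : γ * k₀ ^ (γ - 1) / c₀ < b)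
    {α : ℕ → ℝ} (hα : ∀ k : ℕ, α k = c₀ / ((k : ℝ) + k₀) ^ γ) (ℓ m : ℕ) :
    ∑ k ∈ Icc ℓ m, α ℓ * ∏ j ∈ Icc (ℓ + 1) k, (1 - b * α j) ≤
      (b - γ * k₀ ^ (γ - 1) / c₀)⁻¹ := by
  have hk₀_le (k : ℕ) : k₀ ≤ k + k₀ := le_add_of_nonneg_left k.cast_nonneg
  have hα_pos (k : ℕ) : 0 < α k := by rw [hα]; positivity
  have hbα (k : ℕ) : b * α k ≤ 1 := by
    rw [hα, ← mul_div_assoc]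
    exact div_le_one_of_le₀ (hbc.trans (Real.rpow_le_rpow hk₀.le (hk₀_le k) hγ₀)) (by positivity)
  have hinv (k : ℕ) : (α (k + 1))⁻¹ - (α k)⁻¹ ≤ γ * k₀ ^ (γ - 1) / c₀ := by
    rw [hα, hα, Nat.cast_succ, add_right_comm]
    exact inv_div_add_one_rpow_sub_inv_div_rpow_le hc₀ hk₀ (hk₀_le k) hγ₀ hγ₁
  exact sum_mul_prod_one_sub_le_inv_sub hδ (fun k _ => hα_pos k) (fun k _ => hbα k)
    (fun k _ => hinv k) m

end PolynomialStepSizes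

theorem stmt5_general (b c₀ γ k₀ : ℝ) (hb : 0 < b) (hc₀ : 0 < c₀) (hγ : γ ∈ Set.Ico (0 : ℝ) 1)
    (hk₀ : 0 ≤ k₀) (hbc : b * c₀ ≤ 1) (hk₀' : 2 / (b * c₀) ≤ k₀ ^ (1 - γ))
    (α : ℕ → ℝ) (hα : ∀ k : ℕ, α k = c₀ / ((k : ℝ) + k₀) ^ γ) (ℓ m : ℕ) :
    ∑ k ∈ Icc ℓ m, α ℓ * ∏ j ∈ Icc (ℓ + 1) k, (1 - b * α j) ≤ 2 / (b * (2 - γ)) := by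
  obtain ⟨hγ₀, hγ₁⟩ := hγ
  have hbc₀ : 0 < b * c₀ := mul_pos hb hc₀
  have hk₀_gt : 1 < k₀ := by
    by_contra! hle
    have hpow : k₀ ^ (1 - γ) ≤ 1 := Real.rpow_le_one hk₀ hle (by linarith)
    linarith [(le_div_iff₀ hbc₀).2 (by linarith : 2 * (b * c₀) ≤ 2)]
  have hrate : k₀ ^ (γ - 1) / c₀ ≤ b / 2 := by
    rw [← neg_sub, Real.rpow_neg hk₀, div_le_iff₀ hc₀, div_mul_eq_mul_div, ← inv_div]
    exact inv_anti₀ (by positivity) hk₀'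
  have hδ : γ * k₀ ^ (γ - 1) / c₀ ≤ γ * (b / 2) := by
    rw [mul_div_assoc]
    exact mul_le_mul_of_nonneg_left hrate hγ₀
  have hδ_lt : γ * (b / 2) < b := by nlinarith
  calc ∑ k ∈ Icc ℓ m, α ℓ * ∏ j ∈ Icc (ℓ + 1) k, (1 - b * α j)
      ≤ (b - γ * k₀ ^ (γ - 1) / c₀)⁻¹ :=
        sum_mul_prod_one_sub_div_rpow_le hc₀ hγ₀ hγ₁.le (by linarith)
          (hbc.trans (Real.one_le_rpow hk₀_gt.le hγ₀)) (hδ.trans_lt hδ_lt) hα ℓ m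
    _ ≤ (b - γ * (b / 2))⁻¹ := inv_anti₀ (sub_pos.2 hδ_lt) (by linarith)
    _ = 2 / (b * (2 - γ)) := by rw [← inv_div (b * (2 - γ)) 2]; ring

theorem stmt5 (b c₀ γ k₀ : ℝ) (hb : 0 < b) (hc₀ : 0 < c₀) (hγ : γ ∈ Set.Ioo (1/2 : ℝ) 1)
    (hk₀ : 0 ≤ k₀) (hbc : b * c₀ < 1) (hk₀' : 2 / (b * c₀) ≤ k₀ ^ (1 - γ))
    (α : ℕ → ℝ) (hα : ∀ k : ℕ, α k = c₀ / ((k : ℝ) + k₀) ^ γ)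
    (ℓ n : ℕ) (hℓ : 1 ≤ ℓ) (hℓn : ℓ ≤ n - 1) :
    ∑ k ∈ Finset.Icc ℓ (n - 1), α ℓ * ∏ j ∈ Finset.Icc (ℓ + 1) k, (1 - b * α j)
      ≤ c₀ + 2 / (b * (1 - γ)) := by
  have hγ₁ : 0 < 1 - γ := sub_pos.2 hγ.2
  exact (stmt5_general b c₀ γ k₀ hb hc₀ ⟨by linarith [hγ.1], hγ.2⟩ hk₀ hbc.le hk₀' α hα ℓ
    (n - 1)).trans (le_add_of_nonneg_of_le hc₀.le (by gcongr; norm_num))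
end

section
/- Let b > 0, γ ∈ (0,1), c₀ ≤ 1/b, k₀ ≥ 1 with k₀ ≥ (2γ/(b·c₀))^{1/(1−γ)}, and set α_k = c₀/(k+k₀)^γ. Then for all integers 0 ≤ j ≤ k, α_j · ∏_{ℓ=j+1}^{k} (1 − α_ℓ·b) ≤ α_k, where the product over an empty index range equals 1. -/
open Finset

/-! Write `α n = c₀ / w n` with `w n = (n + k₀) ^ γ`. After clearing denominators, the one-step
inequality `α n * (1 - α (n + 1) * b) ≤ α (n + 1)` says exactly that `w (n + 1) - w n ≤ b * c₀`.
Since `x ↦ x ^ γ` is concave, its increments over unit steps to the right of `k₀` are at most its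
derivative `γ * k₀ ^ (γ - 1)` at `k₀`, and the lower bound on `k₀` makes this at most `b * c₀`. The
product bound follows by multiplying up the one-step inequalities, because the factors
`1 - α ℓ * b` are nonnegative. -/

theorem mul_prod_Icc_le_of_mul_succ_le {M : Type*} [CommMonoidWithZero M] [Preorder M]
    [MulPosMono M] {u f : ℕ → M} {j k : ℕ} (hjk : j ≤ k) (hf : ∀ n, j ≤ n → 0 ≤ f (n + 1))
    (hstep : ∀ n, j ≤ n → u n * f (n + 1) ≤ u (n + 1)) :
    u j * ∏ i ∈ Icc (j + 1) k, f i ≤ u k := by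
  induction k, hjk using Nat.le_induction with
  | base => simp
  | succ n hn ih =>
    calc u j * ∏ i ∈ Icc (j + 1) (n + 1), f i
        = (u j * ∏ i ∈ Icc (j + 1) n, f i) * f (n + 1) := by
          rw [prod_Icc_succ_top (by lia), mul_assoc]
      _ ≤ u n * f (n + 1) := mul_le_mul_of_nonneg_right ih (hf n hn)
      _ ≤ u (n + 1) := hstep n hn

section OrderedField

variable {K : Type*} [Field K] [LinearOrder K] [IsStrictOrderedRing K] {b c : K}

theorem div_mul_one_sub_div_mul_le_div {x y : K} (hc : 0 ≤ c) (hx : 0 < x) (hy : 0 < y)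
    (hxy : y ≤ x + b * c) : c / x * (1 - c / y * b) ≤ c / y := by
  calc c / x * (1 - c / y * b) = c / y * ((y - b * c) / x) := by field_simp
    _ ≤ c / y := mul_le_of_le_one_right (by positivity) ((div_le_one hx).2 (by linarith))

theorem div_mul_prod_one_sub_div_mul_le_div {w : ℕ → K} {j k : ℕ} (hc : 0 ≤ c)
    (hw : ∀ n, 0 < w n) (hbc : ∀ n, b * c ≤ w (n + 1)) (hincr : ∀ n, w (n + 1) ≤ w n + b * c)
    (hjk : j ≤ k) : c / w j * ∏ i ∈ Icc (j + 1) k, (1 - c / w i * b) ≤ c / w k := by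
  refine mul_prod_Icc_le_of_mul_succ_le (u := fun n ↦ c / w n) hjk (fun n _ ↦ ?_)
    fun n _ ↦ div_mul_one_sub_div_mul_le_div hc (hw n) (hw (n + 1)) (hincr n)
  rw [sub_nonneg, div_mul_eq_mul_div, div_le_one (hw _), mul_comm]
  exact hbc n

end OrderedField

theorem add_rpow_le_rpow_add_mul_rpow_sub_one {x h γ : ℝ} (hx : 0 < x) (hh : -x ≤ h)
    (hγ0 : 0 ≤ γ) (hγ1 : γ ≤ 1) : (x + h) ^ γ ≤ x ^ γ + γ * x ^ (γ - 1) * h := by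
  have hratio : -1 ≤ h / x := by rwa [le_div_iff₀ hx, neg_one_mul]
  calc (x + h) ^ γ = x ^ γ * (1 + h / x) ^ γ := by
        rw [← Real.mul_rpow hx.le (by linarith), mul_add, mul_one, mul_div_cancel₀ h hx.ne']
    _ ≤ x ^ γ * (1 + γ * (h / x)) := by
        gcongr
        exact rpow_one_add_le_one_add_mul_self hratio hγ0 hγ1
    _ = x ^ γ + γ * x ^ (γ - 1) * h := by
        rw [Real.rpow_sub_one hx.ne']
        ring

theorem add_one_rpow_le_rpow_add_of_mul_rpow_sub_one_le {a x γ d : ℝ} (ha : 0 < a) (hax : a ≤ x)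
    (hγ0 : 0 ≤ γ) (hγ1 : γ ≤ 1) (hd : γ * a ^ (γ - 1) ≤ d) : (x + 1) ^ γ ≤ x ^ γ + d := by
  have hx : 0 < x := ha.trans_le hax
  have hderiv : γ * x ^ (γ - 1) ≤ γ * a ^ (γ - 1) :=
    mul_le_mul_of_nonneg_left (Real.rpow_le_rpow_of_nonpos ha hax (by linarith)) hγ0
  have htangent := add_rpow_le_rpow_add_mul_rpow_sub_one (h := 1) hx (by linarith) hγ0 hγ1
  linarith

theorem div_rpow_one_div_le_iff_mul_rpow_neg_le {a d p x : ℝ} (ha : 0 ≤ a) (hd : 0 < d)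
    (hp : 0 < p) (hx : 0 < x) : (a / d) ^ (1 / p) ≤ x ↔ a * x ^ (-p) ≤ d := by
  rw [one_div, Real.rpow_inv_le_iff_of_pos (by positivity) hx.le hp, Real.rpow_neg hx.le,
    ← div_eq_mul_inv, div_le_iff₀ hd, div_le_iff₀ (by positivity), mul_comm]

theorem mul_rpow_sub_one_le_of_two_mul_div_rpow_le {γ d x : ℝ} (hγ0 : 0 ≤ γ) (hγ1 : γ < 1)
    (hd : 0 < d) (hx : 0 < x) (h : (2 * γ / d) ^ (1 / (1 - γ)) ≤ x) : γ * x ^ (γ - 1) ≤ d := by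
  rw [div_rpow_one_div_le_iff_mul_rpow_neg_le (by positivity) hd (sub_pos.2 hγ1) hx, neg_sub] at h
  have hle : γ * x ^ (γ - 1) ≤ 2 * γ * x ^ (γ - 1) := by
    gcongr
    linarith
  exact hle.trans h

theorem stmt7_general {b c₀ γ k₀ : ℝ} (hc₀ : 0 ≤ c₀) (hγ : γ ∈ Set.Icc (0 : ℝ) 1) (hk₀ : 0 < k₀)
    (hbc : b * c₀ ≤ (1 + k₀) ^ γ) (hderiv : γ * k₀ ^ (γ - 1) ≤ b * c₀)
    {α : ℕ → ℝ} (hα : ∀ k : ℕ, α k = c₀ / ((k : ℝ) + k₀) ^ γ) {j k : ℕ} (hj : j ≤ k) :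
    α j * ∏ ℓ ∈ Icc (j + 1) k, (1 - α ℓ * b) ≤ α k := by
  obtain ⟨hγ0, hγ1⟩ := hγ
  simp only [hα]
  refine div_mul_prod_one_sub_div_mul_le_div (w := fun n ↦ ((n : ℝ) + k₀) ^ γ) hc₀
    (fun n ↦ by positivity) (fun n ↦ hbc.trans ?_) (fun n ↦ ?_) hj
  · gcongr
    exact_mod_cast n.succ_pos
  · rw [Nat.cast_succ, add_right_comm]
    exact add_one_rpow_le_rpow_add_of_mul_rpow_sub_one_le hk₀
      (le_add_of_nonneg_left n.cast_nonneg) hγ0 hγ1 hderiv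

theorem stmt7 (b c₀ γ k₀ : ℝ) (hb : 0 < b) (hc₀ : 0 < c₀) (hγ : γ ∈ Set.Ioo (0 : ℝ) 1)
    (hcb : c₀ ≤ 1 / b) (hk₀1 : 1 ≤ k₀) (hk₀ : (2 * γ / (b * c₀)) ^ (1 / (1 - γ)) ≤ k₀)
    (α : ℕ → ℝ) (hα : ∀ k : ℕ, α k = c₀ / ((k : ℝ) + k₀) ^ γ)
    (j k : ℕ) (hj : j ≤ k) :
    α j * ∏ ℓ ∈ Finset.Icc (j + 1) k, (1 - α ℓ * b) ≤ α k := by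
  have hbc : b * c₀ ≤ (1 + k₀) ^ γ :=
    ((le_div_iff₀' hb).1 hcb).trans (Real.one_le_rpow (by linarith) hγ.1.le)
  have hk₀0 : 0 < k₀ := by linarith
  exact stmt7_general hc₀.le (Set.Ioo_subset_Icc_self hγ) hk₀0 hbc
    (mul_rpow_sub_one_le_of_two_mul_div_rpow_le hγ.1.le hγ.2 (mul_pos hb hc₀) hk₀0 hk₀) hα hj
end

section
/- Let r > 0, γ ∈ (0,1), c₀ > 0, k₀ ≥ 1 with k₀ ≥ (2γ/(r·c₀))^{1/(1−γ)}, and set α_k = c₀/(k+k₀)^γ. Then for every integer k ≥ 0, α_k/α_{k+1} ≤ 1 + r·α_{k+1}. -/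
/-!
Put `x = k + k₀`, so that `α k / α (k + 1) = (1 + 1 / x) ^ γ`, which Bernoulli's inequality bounds
by `1 + γ / x`. As `γ ≤ x`, the same inequality gives `(x + 1) ^ γ ≤ 2 * x ^ γ`, hence
`γ / x ≤ r * α (k + 1)` as soon as `2 * γ * x ^ γ ≤ r * c₀ * x`. The lower bound on `k₀` is this
last condition solved for `x`.
-/

section Bernoulli

variable {x y p : ℝ}

theorem add_div_rpow_le_one_add_mul_div (hx : 0 < x) (hxy : 0 ≤ x + y) (hp0 : 0 ≤ p)
    (hp1 : p ≤ 1) : ((x + y) / x) ^ p ≤ 1 + p * (y / x) := by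
  have hratio : (x + y) / x = 1 + y / x := by rw [add_div, div_self hx.ne']
  have hy : -1 ≤ y / x := by
    rw [le_div_iff₀ hx]
    linarith
  rw [hratio]
  exact rpow_one_add_le_one_add_mul_self hy hp0 hp1

theorem add_rpow_le_two_mul_rpow (hx : 0 < x) (hxy : 0 ≤ x + y) (hp0 : 0 ≤ p) (hp1 : p ≤ 1)
    (hpy : p * y ≤ x) : (x + y) ^ p ≤ 2 * x ^ p := by
  have hslope : p * (y / x) ≤ 1 := by rwa [← mul_div_assoc, div_le_one hx]
  rw [← div_le_iff₀ (by positivity), ← Real.div_rpow hxy hx.le]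
  linarith [add_div_rpow_le_one_add_mul_div hx hxy hp0 hp1]

theorem div_le_div_add_one_rpow {C : ℝ} (hx : 0 < x) (hp0 : 0 ≤ p) (hp1 : p ≤ 1) (hpx : p ≤ x)
    (hC : 2 * p ≤ C * x ^ (1 - p)) : p / x ≤ C / (x + 1) ^ p := by
  rw [div_le_div_iff₀ hx (by positivity)]
  calc p * (x + 1) ^ p
      ≤ p * (2 * x ^ p) := by
        gcongr
        exact add_rpow_le_two_mul_rpow hx (by positivity) hp0 hp1 (by rwa [mul_one])
    _ = 2 * p * x ^ p := by ring
    _ ≤ C * x ^ (1 - p) * x ^ p := by gcongr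
    _ = C * x := by rw [mul_assoc, ← Real.rpow_add hx, sub_add_cancel, Real.rpow_one]

end Bernoulli

theorem le_mul_rpow_of_div_rpow_one_div_le {a b s x : ℝ} (ha : 0 ≤ a) (hb : 0 < b) (hs : 0 < s)
    (h : (a / b) ^ (1 / s) ≤ x) : a ≤ b * x ^ s := by
  have hab : 0 ≤ a / b := by positivity
  have hx : 0 ≤ x := (Real.rpow_nonneg hab _).trans h
  rwa [one_div, Real.rpow_inv_le_iff_of_pos hab hx hs, div_le_iff₀' hb] at h

theorem div_rpow_div_div_add_one_rpow {c x : ℝ} (hc : c ≠ 0) (hx : 0 ≤ x) (p : ℝ) :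
    c / x ^ p / (c / (x + 1) ^ p) = ((x + 1) / x) ^ p := by
  rw [Real.div_rpow (by positivity) hx, div_div_div_cancel_left' _ _ hc]

theorem stmt8_general (r c₀ γ k₀ : ℝ) (hr : 0 < r) (hc₀ : 0 < c₀) (hγ : γ ∈ Set.Ioo (0 : ℝ) 1)
    (hγk₀ : γ ≤ k₀) (hk₀ : (2 * γ / (r * c₀)) ^ (1 / (1 - γ)) ≤ k₀)
    (α : ℕ → ℝ) (hα : ∀ k : ℕ, α k = c₀ / ((k : ℝ) + k₀) ^ γ)
    (k : ℕ) :
    α k / α (k + 1) ≤ 1 + r * α (k + 1) := by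
  obtain ⟨hγ0, hγ1⟩ := hγ
  set x : ℝ := k + k₀ with hx
  have hk₀x : k₀ ≤ x := le_add_of_nonneg_left k.cast_nonneg
  have hγx : γ ≤ x := hγk₀.trans hk₀x
  have hx0 : 0 < x := hγ0.trans_le hγx
  have hαk : α k = c₀ / x ^ γ := hα k
  have hαk_succ : α (k + 1) = c₀ / (x + 1) ^ γ := by rw [hα, Nat.cast_succ, hx, add_right_comm]
  have hcond : 2 * γ ≤ r * c₀ * x ^ (1 - γ) :=
    le_mul_rpow_of_div_rpow_one_div_le (by positivity) (by positivity) (sub_pos.mpr hγ1)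
      (hk₀.trans hk₀x)
  calc α k / α (k + 1)
      = ((x + 1) / x) ^ γ := by
        rw [hαk, hαk_succ, div_rpow_div_div_add_one_rpow hc₀.ne' hx0.le]
    _ ≤ 1 + γ * (1 / x) := add_div_rpow_le_one_add_mul_div hx0 (by positivity) hγ0.le hγ1.le
    _ = 1 + γ / x := by rw [mul_one_div]
    _ ≤ 1 + r * c₀ / (x + 1) ^ γ :=
        add_le_add le_rfl (div_le_div_add_one_rpow hx0 hγ0.le hγ1.le hγx hcond)
    _ = 1 + r * α (k + 1) := by rw [hαk_succ, mul_div_assoc]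

theorem stmt8 (r c₀ γ k₀ : ℝ) (hr : 0 < r) (hc₀ : 0 < c₀) (hγ : γ ∈ Set.Ioo (0 : ℝ) 1)
    (hk₀1 : 1 ≤ k₀) (hk₀ : (2 * γ / (r * c₀)) ^ (1 / (1 - γ)) ≤ k₀)
    (α : ℕ → ℝ) (hα : ∀ k : ℕ, α k = c₀ / ((k : ℝ) + k₀) ^ γ)
    (k : ℕ) :
    α k / α (k + 1) ≤ 1 + r * α (k + 1) :=
  stmt8_general r c₀ γ k₀ hr hc₀ hγ (hγ.2.le.trans hk₀1) hk₀ α hα k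
end

section
/- Let b > 0, γ ∈ (0,1), c₀·b ≤ 1/2, k₀ ≥ 1 with k₀ ≥ (8γ/(b·c₀))^{1/(1−γ)}, and set α_k = c₀/(k+k₀)^γ. Then for every q ∈ (1, 3] and every integer k ≥ 1, Σ_{j=1}^{k} α_j^q · ∏_{ℓ=j+1}^{k} (1 − α_ℓ·b) ≤ (4/b) · α_k^{q−1}, where the product over an empty index range equals 1. -/
open Finset

/-!
The sum `S k` satisfies `S (n + 1) = (1 - α (n + 1) * b) * S n + α (n + 1) ^ q`, so it stays below
any sequence `B` with `(1 - α (n + 1) * b) * B n + α (n + 1) ^ q ≤ B (n + 1)`. For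
`B n = C / b * α n ^ (q - 1)` and `t = α (n + 1) * b`, this asks that the ratio of `α n ^ (q - 1)`
to `α (n + 1) ^ (q - 1)` be at most `(1 - t / C) / (1 - t)`, which is at least
`exp ((1 - 1 / C) * t)`. With `x = n + k₀` the ratio is
`(1 + 1 / x) ^ (γ * (q - 1)) ≤ exp (γ * (q - 1) / x)`. Since `γ < 1`, `1 / x` decays faster than
`t = b * c₀ / (x + 1) ^ γ`, and the lower bound on `k₀` makes `t` dominate from the first step on.
-/

theorem sum_mul_prod_Icc_succ {R : Type*} [CommSemiring R] (u v : ℕ → R) (n : ℕ) :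
    ∑ j ∈ Icc 1 (n + 1), u j * ∏ ℓ ∈ Icc (j + 1) (n + 1), v ℓ =
      v (n + 1) * (∑ j ∈ Icc 1 n, u j * ∏ ℓ ∈ Icc (j + 1) n, v ℓ) + u (n + 1) := by
  rw [sum_Icc_succ_top (by lia), mul_sum]
  congr 1
  · refine sum_congr rfl fun j hj => ?_
    have hjn : j ≤ n := (mem_Icc.mp hj).2
    rw [prod_Icc_succ_top (by lia)]
    ring
  · simp

theorem sum_mul_prod_Icc_le_of_step {R : Type*} [CommSemiring R] [PartialOrder R]
    [IsOrderedRing R] {u v B : ℕ → R} (hv : ∀ n, 1 ≤ n → 0 ≤ v (n + 1)) (hone : u 1 ≤ B 1)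
    (hstep : ∀ n, 1 ≤ n → v (n + 1) * B n + u (n + 1) ≤ B (n + 1)) {k : ℕ} (hk : 1 ≤ k) :
    ∑ j ∈ Icc 1 k, u j * ∏ ℓ ∈ Icc (j + 1) k, v ℓ ≤ B k := by
  induction k, hk using Nat.le_induction with
  | base => simpa using hone
  | succ n hn ih =>
    rw [sum_mul_prod_Icc_succ]
    calc _ ≤ v (n + 1) * B n + u (n + 1) := by gcongr; exact hv n hn
      _ ≤ B (n + 1) := hstep n hn

theorem one_sub_add_mul_exp_le {r s : ℝ} (hr₀ : 0 ≤ r) (hr₁ : r ≤ 1) (hs : 0 ≤ s) :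
    (1 - (r + s)) * Real.exp s ≤ 1 - r :=
  calc (1 - (r + s)) * Real.exp s ≤ (1 - r) * (1 - s) * Real.exp s := by
        gcongr; linarith [mul_nonneg hr₀ hs]
    _ ≤ (1 - r) * Real.exp (-s) * Real.exp s := by
        gcongr
        exact Real.one_sub_le_exp_neg s
    _ = 1 - r := by rw [mul_assoc, ← Real.exp_add, neg_add_cancel, Real.exp_zero, mul_one]

theorem one_sub_mul_add_le_of_le_mul_exp {a b C x y : ℝ} (ha : 0 ≤ a) (hb : 0 < b) (hC : 1 ≤ C)
    (hab : a * b ≤ 1) (hx : 0 ≤ x) (hy : y ≤ x * Real.exp ((1 - C⁻¹) * (a * b))) :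
    (1 - a * b) * (C / b * y) + x * a ≤ C / b * x := by
  have hinv : C⁻¹ ≤ 1 := inv_le_one_of_one_le₀ hC
  have hab₀ : 0 ≤ a * b := by positivity
  have hfactor : (1 - a * b) * Real.exp ((1 - C⁻¹) * (a * b)) ≤ 1 - C⁻¹ * (a * b) := by
    convert one_sub_add_mul_exp_le (r := C⁻¹ * (a * b)) (s := (1 - C⁻¹) * (a * b))
      (by positivity) (mul_le_one₀ hinv hab₀ hab)
      (mul_nonneg (sub_nonneg.2 hinv) hab₀) using 2
    ring
  calc (1 - a * b) * (C / b * y) + x * a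
      ≤ (1 - a * b) * (C / b * (x * Real.exp ((1 - C⁻¹) * (a * b)))) + x * a := by
        gcongr
    _ = C / b * x * ((1 - a * b) * Real.exp ((1 - C⁻¹) * (a * b)) + C⁻¹ * (a * b)) := by
        field_simp
    _ ≤ C / b * x * 1 := by gcongr; linarith
    _ = C / b * x := mul_one _

theorem sum_rpow_mul_prod_le {b C q : ℝ} {α : ℕ → ℝ} (hb : 0 < b) (hC : 1 ≤ C)
    (hα : ∀ n, 1 ≤ n → 0 < α n) (hαb : ∀ n, 1 ≤ n → α n * b ≤ 1)
    (hratio : ∀ n, 1 ≤ n →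
      α n ^ (q - 1) ≤ α (n + 1) ^ (q - 1) * Real.exp ((1 - C⁻¹) * (α (n + 1) * b)))
    {k : ℕ} (hk : 1 ≤ k) :
    ∑ j ∈ Icc 1 k, α j ^ q * ∏ ℓ ∈ Icc (j + 1) k, (1 - α ℓ * b) ≤ C / b * α k ^ (q - 1) := by
  have hstep (n : ℕ) (hn : 1 ≤ n) {y : ℝ}
      (hy : y ≤ α n ^ (q - 1) * Real.exp ((1 - C⁻¹) * (α n * b))) :
      (1 - α n * b) * (C / b * y) + α n ^ q ≤ C / b * α n ^ (q - 1) := by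
    have hrpow : α n ^ q = α n ^ (q - 1) * α n := by
      rw [← Real.rpow_add_one (hα n hn).ne', sub_add_cancel]
    rw [hrpow]
    exact one_sub_mul_add_le_of_le_mul_exp (hα n hn).le hb hC (hαb n hn)
      (Real.rpow_nonneg (hα n hn).le _) hy
  have hone : α 1 ^ q ≤ C / b * α 1 ^ (q - 1) := by
    have hα₁ : 0 < α 1 := hα 1 le_rfl
    simpa using hstep 1 le_rfl (y := 0) (by positivity)
  exact sum_mul_prod_Icc_le_of_step (u := fun j => α j ^ q) (v := fun ℓ => 1 - α ℓ * b)
    (B := fun n => C / b * α n ^ (q - 1)) (fun n _ => sub_nonneg.2 (hαb (n + 1) (by lia))) hone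
    (fun n hn => hstep (n + 1) (by lia) (hratio n hn)) hk

theorem add_one_rpow_le_rpow_mul_exp {x γ : ℝ} (hx : 0 < x) (hγ : 0 ≤ γ) :
    (x + 1) ^ γ ≤ x ^ γ * Real.exp (γ / x) := by
  have hbase : x + 1 ≤ x * Real.exp x⁻¹ :=
    calc x + 1 = x * (x⁻¹ + 1) := by field_simp; ring
      _ ≤ x * Real.exp x⁻¹ := by gcongr; exact Real.add_one_le_exp _
  calc (x + 1) ^ γ ≤ (x * Real.exp x⁻¹) ^ γ := by gcongr
    _ = x ^ γ * Real.exp (γ / x) := by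
        rw [Real.mul_rpow hx.le (Real.exp_pos _).le, ← Real.exp_mul, inv_mul_eq_div]

theorem div_rpow_rpow_le_mul_exp {c x γ p : ℝ} (hc : 0 ≤ c) (hx : 0 < x) (hγ : 0 ≤ γ)
    (hp : 0 ≤ p) :
    (c / x ^ γ) ^ p ≤ (c / (x + 1) ^ γ) ^ p * Real.exp (γ * p / x) := by
  have hratio : c / x ^ γ ≤ c / (x + 1) ^ γ * Real.exp (γ / x) := by
    rw [div_mul_eq_mul_div, div_le_div_iff₀ (by positivity) (by positivity), mul_assoc,
      mul_comm (Real.exp _)]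
    gcongr
    exact add_one_rpow_le_rpow_mul_exp hx hγ
  calc (c / x ^ γ) ^ p ≤ (c / (x + 1) ^ γ * Real.exp (γ / x)) ^ p := by gcongr
    _ = (c / (x + 1) ^ γ) ^ p * Real.exp (γ * p / x) := by
        rw [Real.mul_rpow (by positivity) (Real.exp_pos _).le, ← Real.exp_mul,
          div_mul_eq_mul_div]

theorem div_le_inv_rpow_of_rpow_le {M y γ : ℝ} (hM : 0 ≤ M) (hy : 0 < y) (hγ : γ < 1)
    (h : M ^ (1 / (1 - γ)) ≤ y) : M / y ≤ (y ^ γ)⁻¹ := by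
  rw [one_div, Real.rpow_inv_le_iff_of_pos hM hy.le (sub_pos.2 hγ), Real.rpow_sub hy,
    Real.rpow_one] at h
  rwa [div_le_iff₀ hy, inv_mul_eq_div]

theorem div_rpow_rpow_le_mul_exp_of_rpow_le {b c x γ p θ κ : ℝ} (hb : 0 < b) (hc : 0 < c)
    (hx : 1 ≤ x) (hγ : γ ∈ Set.Ico (0 : ℝ) 1) (hp : 0 ≤ p) (hθ : 0 ≤ θ) (hκ₀ : 0 ≤ κ)
    (hκ : 2 * γ * p ≤ θ * κ) (h : (κ / (b * c)) ^ (1 / (1 - γ)) ≤ x + 1) :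
    (c / x ^ γ) ^ p ≤ (c / (x + 1) ^ γ) ^ p * Real.exp (θ * (c / (x + 1) ^ γ * b)) := by
  obtain ⟨hγ₀, hγ₁⟩ := hγ
  have hexponent : γ * p / x ≤ θ * (c / (x + 1) ^ γ * b) :=
    calc γ * p / x = 2 * γ * p / (x + x) := by field_simp; norm_num
      _ ≤ θ * κ / (x + 1) := by gcongr
      _ = θ * (b * c) * (κ / (b * c) / (x + 1)) := by field_simp
      _ ≤ θ * (b * c) * ((x + 1) ^ γ)⁻¹ := by
          gcongr
          exact div_le_inv_rpow_of_rpow_le (by positivity) (by positivity) hγ₁ h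
      _ = θ * (c / (x + 1) ^ γ * b) := by ring
  calc (c / x ^ γ) ^ p ≤ (c / (x + 1) ^ γ) ^ p * Real.exp (γ * p / x) :=
        div_rpow_rpow_le_mul_exp hc.le (by positivity) hγ₀ hp
    _ ≤ _ := by gcongr

theorem stmt9_general (b c₀ γ k₀ C κ q : ℝ) (hb : 0 < b) (hc₀ : 0 < c₀)
    (hγ : γ ∈ Set.Ico (0 : ℝ) 1) (hC : 1 ≤ C) (hcb : c₀ * b ≤ 1) (hq : 1 ≤ q) (hκ₀ : 0 ≤ κ)
    (hκ : 2 * γ * (q - 1) ≤ (1 - C⁻¹) * κ) (hk₀ : (κ / (b * c₀)) ^ (1 / (1 - γ)) ≤ k₀)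
    (α : ℕ → ℝ) (hα : ∀ k : ℕ, α k = c₀ / ((k : ℝ) + k₀) ^ γ) (k : ℕ) (hk : 1 ≤ k) :
    ∑ j ∈ Icc 1 k, α j ^ q * ∏ ℓ ∈ Icc (j + 1) k, (1 - α ℓ * b) ≤ C / b * α k ^ (q - 1) := by
  have hq₀ : 0 ≤ q - 1 := sub_nonneg.2 hq
  have hθ : 0 ≤ 1 - C⁻¹ := sub_nonneg.2 (inv_le_one_of_one_le₀ hC)
  have hk₀_nonneg : 0 ≤ k₀ := le_trans (by positivity) hk₀
  have hbase (n : ℕ) (hn : 1 ≤ n) : 1 ≤ (n : ℝ) + k₀ :=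
    le_add_of_le_of_nonneg (mod_cast hn) hk₀_nonneg
  have hα_pos (n : ℕ) (hn : 1 ≤ n) : 0 < α n := by
    have := hbase n hn
    rw [hα]; positivity
  have hα_le (n : ℕ) (hn : 1 ≤ n) : α n ≤ c₀ :=
    hα n ▸ div_le_self hc₀.le (Real.one_le_rpow (hbase n hn) hγ.1)
  refine sum_rpow_mul_prod_le hb hC hα_pos
    (fun n hn => (mul_le_mul_of_nonneg_right (hα_le n hn) hb.le).trans hcb) (fun n hn => ?_) hk
  have hk₀_le : k₀ ≤ n + k₀ + 1 := by linarith [n.cast_nonneg (α := ℝ)]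
  rw [hα n, hα (n + 1), Nat.cast_add_one, add_right_comm]
  exact div_rpow_rpow_le_mul_exp_of_rpow_le hb hc₀ (hbase n hn) hγ hq₀ hθ hκ₀ hκ
    (hk₀.trans hk₀_le)

theorem stmt9 (b c₀ γ k₀ : ℝ) (hb : 0 < b) (hc₀ : 0 < c₀) (hγ : γ ∈ Set.Ioo (0 : ℝ) 1)
    (hcb : c₀ * b ≤ 1 / 2) (hk₀1 : 1 ≤ k₀)
    (hk₀ : (8 * γ / (b * c₀)) ^ (1 / (1 - γ)) ≤ k₀)
    (α : ℕ → ℝ) (hα : ∀ k : ℕ, α k = c₀ / ((k : ℝ) + k₀) ^ γ)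
    (q : ℝ) (hq : q ∈ Set.Ioc (1 : ℝ) 3) (k : ℕ) (hk : 1 ≤ k) :
    ∑ j ∈ Finset.Icc 1 k, (α j) ^ q * ∏ ℓ ∈ Finset.Icc (j + 1) k, (1 - α ℓ * b)
      ≤ (4 / b) * (α k) ^ (q - 1) := by
  have hκ : 2 * γ * (q - 1) ≤ (1 - 4⁻¹) * (8 * γ) := by nlinarith [hγ.1, hq.2]
  exact stmt9_general b c₀ γ k₀ 4 (8 * γ) q hb hc₀ ⟨hγ.1.le, hγ.2⟩ (by norm_num) (by linarith)
    hq.1.le (by linarith [hγ.1]) hκ hk₀ α hα k hk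
end

section
/- Let Ā ∈ ℝ^{d×d} be invertible, let (α_ℓ) be any real sequence, and fix a horizon n ≥ 2. Then for every 1 ≤ ℓ ≤ n−1, Q_ℓ − Ā^{−1} = S_ℓ − Ā^{−1} G_{ℓ:n−1}, and moreover Σ_{i=1}^{n−1} (Q_i − Ā^{−1}) = − Ā^{−1} Σ_{j=1}^{n−1} G_{1:j}. -/
open Matrix Finset Set

/-- The `Q`-weighted vector norm `‖x‖_Q = √(xᵀ Q x)`. -/
noncomputable def qVecNorm {d : ℕ} (Q : Matrix (Fin d) (Fin d) ℝ) (x : Fin d → ℝ) : ℝ :=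
  Real.sqrt (x ⬝ᵥ Q.mulVec x)

/-- The induced matrix `Q`-norm `‖B‖_Q = sup_{x ≠ 0} ‖Bx‖_Q / ‖x‖_Q`. -/
noncomputable def qMatNorm {d : ℕ} (Q B : Matrix (Fin d) (Fin d) ℝ) : ℝ :=
  ⨆ x : {x : Fin d → ℝ // x ≠ 0}, qVecNorm Q (B.mulVec x.1) / qVecNorm Q x.1

/-- The spectral (operator) norm, i.e. the matrix norm induced by the Euclidean vector norm. -/
noncomputable def specNorm {d : ℕ} (B : Matrix (Fin d) (Fin d) ℝ) : ℝ :=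
  qMatNorm 1 B

/-- Smallest eigenvalue of a (symmetric) matrix, as the infimum of its real spectrum. -/
noncomputable def lamMin {d : ℕ} (P : Matrix (Fin d) (Fin d) ℝ) : ℝ :=
  sInf (spectrum ℝ P)

/-- Largest eigenvalue of a (symmetric) matrix, as the supremum of its real spectrum. -/
noncomputable def lamMax {d : ℕ} (P : Matrix (Fin d) (Fin d) ℝ) : ℝ :=
  sSup (spectrum ℝ P)

/-- `-A` is Hurwitz: every (complex) eigenvalue of `A` has strictly positive real part. -/
def NegHurwitz {d : ℕ} (A : Matrix (Fin d) (Fin d) ℝ) : Prop :=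
  ∀ μ ∈ spectrum ℂ (A.map (fun x : ℝ => (x : ℂ))), 0 < μ.re

/-- The matrix product `G_{m:k} = ∏_{ℓ=m}^{k} (I - α_ℓ Ā)` (with `G_{m:k} = I` for `m > k`);
all factors commute, and the convention `∏_{ℓ=m}^{k} A_ℓ = A_k ⋯ A_m` is used. -/
noncomputable def Gprod {d : ℕ} (Abar : Matrix (Fin d) (Fin d) ℝ) (α : ℕ → ℝ) (m : ℕ) :
    ℕ → Matrix (Fin d) (Fin d) ℝ
  | 0 => if m = 0 then (1 : Matrix (Fin d) (Fin d) ℝ) - α 0 • Abar else 1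
  | k + 1 =>
      if m ≤ k + 1 then
        ((1 : Matrix (Fin d) (Fin d) ℝ) - α (k + 1) • Abar) * Gprod Abar α m k
      else 1

/-- `Q_ℓ = α_ℓ ∑_{k=ℓ}^{n-1} G_{ℓ+1:k}` for a fixed horizon `n`. -/
noncomputable def Qmat {d : ℕ} (Abar : Matrix (Fin d) (Fin d) ℝ) (α : ℕ → ℝ) (n ℓ : ℕ) :
    Matrix (Fin d) (Fin d) ℝ :=
  α ℓ • ∑ k ∈ Finset.Icc ℓ (n - 1), Gprod Abar α (ℓ + 1) k

/-- `S_ℓ = ∑_{j=ℓ+1}^{n-1} (α_ℓ - α_j) G_{ℓ+1:j-1}` for a fixed horizon `n`. -/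
noncomputable def Smat {d : ℕ} (Abar : Matrix (Fin d) (Fin d) ℝ) (α : ℕ → ℝ) (n ℓ : ℕ) :
    Matrix (Fin d) (Fin d) ℝ :=
  ∑ j ∈ Finset.Icc (ℓ + 1) (n - 1), (α ℓ - α j) • Gprod Abar α (ℓ + 1) (j - 1)

/-!
Apart from `Ā⁻¹`, every matrix involved is a polynomial in `Ā`, so both identities, once multiplied
by `Ā`, are evaluations of identities in the commutative ring `ℝ[X]`. With
`P m k = ∏_{m ≤ i < k} (1 - α_i X)` these come from telescoping `1 - P m n` in two ways, as
`∑_j α_j X * P m j` for the first identity and as `∑_j α_j X * P (j + 1) n` for the second, in which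
the order of summation is exchanged first.
-/

open Polynomial

section Telescoping

variable {R : Type*} [CommRing R] (f : ℕ → R) (m n : ℕ)

theorem sum_Ico_mul_prod_Ico_left_one_sub :
    ∑ j ∈ Finset.Ico m n, f j * ∏ i ∈ Finset.Ico m j, (1 - f i)
      = 1 - ∏ i ∈ Finset.Ico m n, (1 - f i) := by
  rw [prod_one_sub_ordered, sub_sub_cancel]
  refine Finset.sum_congr rfl fun j hj => ?_
  rw [Finset.Ico_filter_lt_of_le_right (Finset.mem_Ico.mp hj).2.le]

theorem sum_Ico_mul_prod_Ico_right_one_sub :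
    ∑ j ∈ Finset.Ico m n, f j * ∏ i ∈ Finset.Ico (j + 1) n, (1 - f i)
      = 1 - ∏ i ∈ Finset.Ico m n, (1 - f i) := by
  obtain hnm | hmn := le_total n m
  · simp [hnm]
  have step : ∀ j ∈ Finset.Ico m n, f j * ∏ i ∈ Finset.Ico (j + 1) n, (1 - f i)
      = ∏ i ∈ Finset.Ico (j + 1) n, (1 - f i) - ∏ i ∈ Finset.Ico j n, (1 - f i) := by
    intro j hj
    rw [Finset.prod_eq_prod_Ico_succ_bot (Finset.mem_Ico.mp hj).2]
    ring
  rw [Finset.sum_congr rfl step,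
    Finset.sum_Ico_sub (fun j => ∏ i ∈ Finset.Ico j n, (1 - f i)) hmn, Finset.Ico_self,
    Finset.prod_empty]

end Telescoping

section Polynomials

variable {K : Type*} [CommRing K] (α : ℕ → K)

/-- The polynomial whose value at `Ā` is `G_{m:k-1}`. The upper index is exclusive, so that no
subtraction of indices is needed. -/
noncomputable def stepPoly (m k : ℕ) : K[X] :=
  ∏ i ∈ Finset.Ico m k, (1 - α i • X)

/-- The polynomial whose value at `Ā` is `Q_ℓ`, for the horizon `n`. -/
noncomputable def weightPoly (n ℓ : ℕ) : K[X] :=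
  α ℓ • ∑ k ∈ Finset.Ico ℓ n, stepPoly α (ℓ + 1) (k + 1)

/-- The polynomial whose value at `Ā` is `S_ℓ`, for the horizon `n`. -/
noncomputable def stepGapPoly (n ℓ : ℕ) : K[X] :=
  ∑ j ∈ Finset.Ico (ℓ + 1) n, (α ℓ - α j) • stepPoly α (ℓ + 1) j

theorem stepPoly_eq_one_of_le {m k : ℕ} (h : k ≤ m) : stepPoly α m k = 1 := by
  rw [stepPoly, Finset.Ico_eq_empty_of_le h, Finset.prod_empty]

theorem stepPoly_succ_right {m k : ℕ} (h : m ≤ k) :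
    stepPoly α m (k + 1) = (1 - α k • X) * stepPoly α m k := by
  rw [stepPoly, Finset.prod_Ico_succ_top h, mul_comm, stepPoly]

theorem stepPoly_eq_mul_succ_left {m k : ℕ} (h : m < k) :
    stepPoly α m k = (1 - α m • X) * stepPoly α (m + 1) k :=
  Finset.prod_eq_prod_Ico_succ_bot h _

theorem X_mul_sum_smul_stepPoly_left (m n : ℕ) :
    X * ∑ j ∈ Finset.Ico m n, α j • stepPoly α m j = 1 - stepPoly α m n := by
  simpa only [Finset.mul_sum, mul_smul_comm, smul_mul_assoc, stepPoly] using
    sum_Ico_mul_prod_Ico_left_one_sub (fun j => α j • (X : K[X])) m n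

theorem X_mul_sum_smul_stepPoly_right (m n : ℕ) :
    X * ∑ j ∈ Finset.Ico m n, α j • stepPoly α (j + 1) n = 1 - stepPoly α m n := by
  simpa only [Finset.mul_sum, mul_smul_comm, smul_mul_assoc, stepPoly] using
    sum_Ico_mul_prod_Ico_right_one_sub (fun j => α j • (X : K[X])) m n

theorem weightPoly_sub_stepGapPoly {n ℓ : ℕ} (h : ℓ < n) :
    weightPoly α n ℓ - stepGapPoly α n ℓ
      = ∑ j ∈ Finset.Ico (ℓ + 1) n, α j • stepPoly α (ℓ + 1) j
        + α ℓ • stepPoly α (ℓ + 1) n := by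
  have shift : ∑ k ∈ Finset.Ico ℓ n, stepPoly α (ℓ + 1) (k + 1)
      = ∑ j ∈ Finset.Ico (ℓ + 1) n, stepPoly α (ℓ + 1) j + stepPoly α (ℓ + 1) n := by
    rw [Finset.sum_Ico_add' (stepPoly α (ℓ + 1)), Finset.sum_Ico_succ_top h]
  simp only [weightPoly, stepGapPoly, shift, sub_smul, Finset.sum_sub_distrib, smul_add,
    Finset.smul_sum]
  abel

theorem X_mul_weightPoly_sub_one {n ℓ : ℕ} (h : ℓ < n) :
    X * weightPoly α n ℓ - 1 = X * stepGapPoly α n ℓ - stepPoly α ℓ n := by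
  have key : X * (weightPoly α n ℓ - stepGapPoly α n ℓ) = 1 - stepPoly α ℓ n := by
    rw [weightPoly_sub_stepGapPoly α h, mul_add, X_mul_sum_smul_stepPoly_left,
      stepPoly_eq_mul_succ_left α h, sub_mul, one_mul, mul_smul_comm, smul_mul_assoc]
    abel
  linear_combination key

theorem sum_X_mul_weightPoly_sub_one (m n : ℕ) :
    ∑ i ∈ Finset.Ico m n, (X * weightPoly α n i - 1)
      = -∑ j ∈ Finset.Ico m n, stepPoly α m (j + 1) := by
  have exchange : ∑ i ∈ Finset.Ico m n, weightPoly α n i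
      = ∑ j ∈ Finset.Ico m n, ∑ i ∈ Finset.Ico m (j + 1), α i • stepPoly α (i + 1) (j + 1) := by
    simp only [weightPoly, Finset.smul_sum]
    exact Finset.sum_Ico_Ico_comm m n _
  rw [Finset.sum_sub_distrib, ← Finset.mul_sum, exchange, Finset.mul_sum,
    ← Finset.sum_sub_distrib, ← Finset.sum_neg_distrib]
  refine Finset.sum_congr rfl fun j _ => ?_
  rw [X_mul_sum_smul_stepPoly_right, sub_sub_cancel_left]

end Polynomials

section Evaluation

variable {K R : Type*} [CommRing K] [Ring R] [Algebra K R] {A B : R}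

theorem mul_aeval_X_mul_sub (hBA : B * A = 1) (p q : K[X]) :
    B * aeval A (X * p - q) = aeval A p - B * aeval A q := by
  rw [map_sub, map_mul, aeval_X, mul_sub, ← mul_assoc, hBA, one_mul]

theorem stmt13_general (hBA : B * A = 1) (α : ℕ → K) (n : ℕ) :
    (∀ ℓ < n, aeval A (weightPoly α n ℓ) - B
        = aeval A (stepGapPoly α n ℓ) - B * aeval A (stepPoly α ℓ n)) ∧
    ∀ m, ∑ i ∈ Finset.Ico m n, (aeval A (weightPoly α n i) - B)
        = -(B * ∑ j ∈ Finset.Ico m n, aeval A (stepPoly α m (j + 1))) := by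
  have inv_sub (p : K[X]) : aeval A p - B = B * aeval A (X * p - 1) := by
    rw [mul_aeval_X_mul_sub hBA, map_one, mul_one]
  refine ⟨fun ℓ hℓ => ?_, fun m => ?_⟩
  · rw [inv_sub, X_mul_weightPoly_sub_one α hℓ, mul_aeval_X_mul_sub hBA]
  · simp only [inv_sub]
    rw [← Finset.mul_sum, ← map_sum, sum_X_mul_weightPoly_sub_one, map_neg, map_sum, mul_neg]

end Evaluation

section Matrices

variable {d : ℕ} (A : Matrix (Fin d) (Fin d) ℝ) (α : ℕ → ℝ)

theorem aeval_stepPoly_succ_right {m k : ℕ} (h : m ≤ k) :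
    aeval A (stepPoly α m (k + 1)) = (1 - α k • A) * aeval A (stepPoly α m k) := by
  rw [stepPoly_succ_right α h, map_mul, map_sub, map_one, map_smul, aeval_X]

theorem Gprod_eq_aeval (m k : ℕ) : Gprod A α m k = aeval A (stepPoly α m (k + 1)) := by
  obtain hkm | hmk := lt_or_ge k m
  · rw [stepPoly_eq_one_of_le α hkm, map_one]
    cases k <;> rw [Gprod, if_neg (by omega)]
  · rw [aeval_stepPoly_succ_right A α hmk]
    cases k with
    | zero => rw [Gprod, if_pos (by omega), stepPoly_eq_one_of_le α m.zero_le, map_one, mul_one]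
    | succ k => rw [Gprod, if_pos hmk, Gprod_eq_aeval m k]

theorem Qmat_succ_eq_aeval (N ℓ : ℕ) :
    Qmat A α (N + 1) ℓ = aeval A (weightPoly α (N + 1) ℓ) := by
  simp only [Qmat, weightPoly, Gprod_eq_aeval, map_smul, map_sum, Nat.add_sub_cancel,
    Finset.Ico_add_one_right_eq_Icc]

theorem Smat_succ_eq_aeval (N ℓ : ℕ) :
    Smat A α (N + 1) ℓ = aeval A (stepGapPoly α (N + 1) ℓ) := by
  simp only [Smat, stepGapPoly, Gprod_eq_aeval, map_smul, map_sum, Nat.add_sub_cancel,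
    Finset.Ico_add_one_right_eq_Icc]
  refine Finset.sum_congr rfl fun j hj => ?_
  rw [Nat.sub_add_cancel ((Nat.le_add_left 1 ℓ).trans (Finset.mem_Icc.mp hj).1)]

end Matrices

theorem stmt13 {d : ℕ} (Abar : Matrix (Fin d) (Fin d) ℝ) (hA : IsUnit Abar.det)
    (α : ℕ → ℝ) (n : ℕ) (hn : 2 ≤ n) :
    (∀ ℓ : ℕ, 1 ≤ ℓ → ℓ ≤ n - 1 →
        Qmat Abar α n ℓ - Abar⁻¹
          = Smat Abar α n ℓ - Abar⁻¹ * Gprod Abar α ℓ (n - 1)) ∧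
    (∑ i ∈ Finset.Icc 1 (n - 1), (Qmat Abar α n i - Abar⁻¹)
        = -(Abar⁻¹ * ∑ j ∈ Finset.Icc 1 (n - 1), Gprod Abar α 1 j)) := by
  obtain ⟨N, rfl⟩ := Nat.exists_eq_add_of_le' (one_le_two.trans hn)
  obtain ⟨hQ, hsum⟩ := stmt13_general (Matrix.nonsing_inv_mul Abar hA) α (N + 1)
  simp only [Qmat_succ_eq_aeval, Smat_succ_eq_aeval, Gprod_eq_aeval, Nat.add_sub_cancel,
    ← Finset.Ico_add_one_right_eq_Icc]
  exact ⟨fun ℓ _ hℓ => hQ ℓ (Nat.lt_succ_of_le hℓ), hsum 1⟩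
end
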